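/- arXiv:2004.04879 — 2 statements merged into one kernel-verified Lean document; each statement's English description precedes it below -/
import Mathlib

section
/- Let X be a σ-Dedekind complete f-algebra. Then X is semiprime (x·x = 0 implies x = 0) if and only if for every u ∈ X₊ the band generated by u equals the band generated by u², i.e., for every u ∈ X₊ and every x ∈ X: (for all y ∈ X, |y| ⊓ u = 0 implies |y| ⊓ |x| = 0) if and only if (for all y ∈ X, |y| ⊓ (u·u) = 0 implies |y| ⊓ |x| = 0). -/
/-!
Semiprimeness gives equality of the disjoint complements `{u}ᵈ = {u²}ᵈ`: if `v ≥ 0` is disjoint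
from `u²`, then `w = v ⊓ u` satisfies `w² ≤ u²`, while the f-algebra property makes `w²` disjoint
from `u²`; hence `w² = 0` and so `w = 0`. The other inclusion is immediate from the f-algebra
property.

Conversely, if `x² = 0` then `|x|² = x² = 0`, because disjoint elements of an f-algebra have zero
product. The band generated by `|x|² = 0` is trivial, so it contains `|x|` only if `x = 0`.
-/

universe u

/-- Disjoint positive elements multiply to zero: the disjointness of `x` and `y` passes first to
`y * x` and `y`, and then to `y * x` and itself. -/
theorem mul_eq_zero_of_disjoint {X : Type u} [Lattice X] [NonUnitalRing X]
    (hf : ∀ x y u : X, x ⊓ y = 0 → 0 ≤ u → (u * x) ⊓ y = 0 ∧ (x * u) ⊓ y = 0)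
    {x y : X} (h : x ⊓ y = 0) : y * x = 0 := by
  have hx : 0 ≤ x := h ▸ inf_le_left
  have hy : 0 ≤ y := h ▸ inf_le_right
  have h1 := (hf x y y h hy).1
  rw [inf_comm] at h1
  simpa using (hf y (y * x) x h1 hx).2

theorem abs_mul_abs_of_disjoint_mul {X : Type u} [Lattice X] [NonUnitalRing X]
    [CovariantClass X X (· + ·) (· ≤ ·)]
    (hf : ∀ x y u : X, x ⊓ y = 0 → 0 ≤ u → (u * x) ⊓ y = 0 ∧ (x * u) ⊓ y = 0)
    (x : X) : |x| * |x| = x * x := by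
  have h : x⁺ ⊓ x⁻ = 0 := posPart_inf_negPart_eq_zero x
  have h1 : x⁻ * x⁺ = 0 := mul_eq_zero_of_disjoint hf h
  have h2 : x⁺ * x⁻ = 0 := mul_eq_zero_of_disjoint hf (by rwa [inf_comm] at h)
  have ha : |x| = x⁺ + x⁻ := (posPart_add_negPart x).symm
  have hx : x = x⁺ - x⁻ := (posPart_sub_negPart x).symm
  calc |x| * |x| = (x⁺ + x⁻) * (x⁺ + x⁻) := by rw [ha]
    _ = (x⁺ - x⁻) * (x⁺ - x⁻) := by simp only [add_mul, mul_add, sub_mul, mul_sub, h1, h2]; abel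
    _ = x * x := by rw [← hx]

theorem mul_self_le_of_le {X : Type u} [Lattice X] [NonUnitalRing X]
    [CovariantClass X X (· + ·) (· ≤ ·)]
    (hpos : ∀ x y : X, 0 ≤ x → 0 ≤ y → 0 ≤ x * y)
    {w u : X} (hw : 0 ≤ w) (h : w ≤ u) : w * w ≤ u * u := by
  have h1 : 0 ≤ u * (u - w) := hpos _ _ (hw.trans h) (sub_nonneg.2 h)
  have h2 : 0 ≤ (u - w) * w := hpos _ _ (sub_nonneg.2 h) hw
  rw [mul_sub, sub_nonneg] at h1
  rw [sub_mul, sub_nonneg] at h2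
  exact h2.trans h1

/-- In a semiprime f-algebra, `u` and `u²` have the same disjoint complement. -/
theorem disjoint_iff_disjoint_mul_self {X : Type u} [Lattice X] [NonUnitalRing X]
    [CovariantClass X X (· + ·) (· ≤ ·)]
    (hpos : ∀ x y : X, 0 ≤ x → 0 ≤ y → 0 ≤ x * y)
    (hf : ∀ x y u : X, x ⊓ y = 0 → 0 ≤ u → (u * x) ⊓ y = 0 ∧ (x * u) ⊓ y = 0)
    (hs : ∀ x : X, x * x = 0 → x = 0) {u v : X} (hu : 0 ≤ u) (hv : 0 ≤ v) :
    v ⊓ u = 0 ↔ v ⊓ (u * u) = 0 := by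
  constructor
  · intro h
    rw [inf_comm] at h ⊢
    exact (hf u v u h hu).1
  · intro h
    have hw : 0 ≤ v ⊓ u := le_inf hv hu
    have h1 : (v ⊓ u) ⊓ (u * u) = 0 :=
      le_antisymm (h ▸ inf_le_inf_right _ inf_le_left) (le_inf hw (hpos u u hu hu))
    have h2 := (hf _ _ _ h1 hw).1
    rw [inf_eq_left.2 (mul_self_le_of_le hpos hw inf_le_right)] at h2
    exact hs _ h2

/-- In a σ-Dedekind complete f-algebra `X`, semiprimeness (`x·x = 0 → x = 0`) is
equivalent to: for every `u ∈ X₊` the band generated by `u` equals the band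
generated by `u²` (bands described via disjoint complements). -/
theorem statement16 {X : Type u} [Lattice X] [NonUnitalRing X]
    [CovariantClass X X (· + ·) (· ≤ ·)] [Module ℝ X] [PosSMulMono ℝ X]
    [IsScalarTower ℝ X X] [SMulCommClass ℝ X X]
    (hpos : ∀ x y : X, 0 ≤ x → 0 ≤ y → 0 ≤ x * y)
    (hf : ∀ x y u : X, x ⊓ y = 0 → 0 ≤ u → (u * x) ⊓ y = 0 ∧ (x * u) ⊓ y = 0)
    (hσ : ∀ S : Set X, S.Nonempty → S.Countable → BddAbove S → ∃ m : X, IsLUB S m) :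
    (∀ x : X, x * x = 0 → x = 0) ↔
    (∀ u : X, 0 ≤ u → ∀ x : X,
      ((∀ y : X, |y| ⊓ u = 0 → |y| ⊓ |x| = 0) ↔
       (∀ y : X, |y| ⊓ (u * u) = 0 → |y| ⊓ |x| = 0))) := by
  constructor
  · intro hs u hu x
    have key (y : X) := disjoint_iff_disjoint_mul_self hpos hf hs hu (abs_nonneg y)
    simp only [key]
  · intro h x hx
    have hsq : |x| * |x| = 0 := (abs_mul_abs_of_disjoint_mul hf x).trans hx
    have hband := (h |x| (abs_nonneg x) x).1 (fun _ hy => hy) x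
    rw [hsq, inf_idem, inf_eq_right.2 (abs_nonneg x)] at hband
    -- `|x| = 0` forces both `x ≤ 0` and `-x ≤ 0`.
    have h0 := hband rfl
    exact le_antisymm (h0 ▸ le_abs_self x) (neg_nonpos.1 (h0 ▸ neg_le_abs x))
end

section
/- Let X be a σ-Dedekind complete semiprime f-algebra. Then the algebra multiplication in X is uo-continuous: if a net (x_α)_{α∈A} satisfies x_α →uo x, then y·x_α →uo y·x for every y ∈ X. -/
/-!
Put `T w = |y| * w` and `w = |x_α - l|`. Then `|y * x_α - y * l| ≤ T w`, so it is enough to dominate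
`v ⊓ T w`. Since `T` preserves disjointness,
`v ⊓ T w ≤ T (v ⊓ w) + v ⊓ w` (`inf_mul_le`),
and a net `Y_β ↓ 0` that eventually dominates `v ⊓ w` gives the net `T Y_β + Y_β`, which eventually
dominates `v ⊓ T w`.

It remains to see that `T Y_β + Y_β ↓ 0`, i.e. that `T` is order continuous. This follows from
`T w ≤ r w + r⁻¹ T² w` for `w ≥ 0` and `r > 0` (`mul_le_smul_add`): a lower bound `g` of the net
satisfies `g ≤ (r + 1) Y_β + r⁻¹ T² Y_{β₀}` for all `β`, so `r g ≤ T² Y_{β₀}` for every `r > 0`, and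
`g ≤ 0` because σ-Dedekind complete Riesz spaces are Archimedean.
-/

universe u v

/-- Order convergence of a net in a Riesz space. -/
def OrderConv {X : Type u} [Lattice X] [AddCommGroup X] {A : Type v} [Preorder A]
    (x : A → X) (l : X) : Prop :=
  ∃ (B : Type u) (leB : B → B → Prop) (y : B → X),
    Nonempty B ∧
    (∀ b, leB b b) ∧
    (∀ b₁ b₂ b₃, leB b₁ b₂ → leB b₂ b₃ → leB b₁ b₃) ∧
    (∀ b₁ b₂, ∃ b₃, leB b₁ b₃ ∧ leB b₂ b₃) ∧
    (∀ b₁ b₂, leB b₁ b₂ → y b₂ ≤ y b₁) ∧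
    IsGLB (Set.range y) 0 ∧
    (∀ b, ∃ a₀ : A, ∀ a, a₀ ≤ a → |x a - l| ≤ y b)

/-- Unbounded order (uo-) convergence: `v ⊓ |x_α − l| →o 0` for every `v ∈ X₊`. -/
def UOConv {X : Type u} [Lattice X] [AddCommGroup X] {A : Type v} [Preorder A]
    (x : A → X) (l : X) : Prop :=
  ∀ v : X, 0 ≤ v → OrderConv (fun a => v ⊓ |x a - l|) 0

section FAlgebra

variable {X : Type u} [Lattice X] [NonUnitalRing X] [CovariantClass X X (· + ·) (· ≤ ·)]

theorem mul_le_mul_left_of_pos (hpos : ∀ x y : X, 0 ≤ x → 0 ≤ y → 0 ≤ x * y)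
    {u a b : X} (hu : 0 ≤ u) (hab : a ≤ b) : u * a ≤ u * b := by
  have h := hpos u (b - a) hu (sub_nonneg.2 hab)
  rw [mul_sub] at h
  exact sub_nonneg.1 h

theorem abs_mul_le_of_pos (hpos : ∀ x y : X, 0 ≤ x → 0 ≤ y → 0 ≤ x * y) (y d : X) :
    |y * d| ≤ |y| * |d| := by
  have h1 := hpos _ _ (posPart_nonneg y) (posPart_nonneg d)
  have h2 := hpos _ _ (posPart_nonneg y) (negPart_nonneg d)
  have h3 := hpos _ _ (negPart_nonneg y) (posPart_nonneg d)
  have h4 := hpos _ _ (negPart_nonneg y) (negPart_nonneg d)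
  have ey : y * d = (y⁺ - y⁻) * (d⁺ - d⁻) := by
    rw [posPart_sub_negPart, posPart_sub_negPart]
  rw [← posPart_add_negPart y, ← posPart_add_negPart d, ey, abs_le']
  constructor
  · rw [← sub_nonneg]
    have e : (y⁺ + y⁻) * (d⁺ + d⁻) - (y⁺ - y⁻) * (d⁺ - d⁻)
        = (y⁺ * d⁻ + y⁻ * d⁺) + (y⁺ * d⁻ + y⁻ * d⁺) := by noncomm_ring
    rw [e]
    exact add_nonneg (add_nonneg h2 h3) (add_nonneg h2 h3)
  · rw [← sub_nonneg]
    have e : (y⁺ + y⁻) * (d⁺ + d⁻) - -((y⁺ - y⁻) * (d⁺ - d⁻))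
        = (y⁺ * d⁺ + y⁻ * d⁻) + (y⁺ * d⁺ + y⁻ * d⁻) := by noncomm_ring
    rw [e]
    exact add_nonneg (add_nonneg h1 h4) (add_nonneg h1 h4)

theorem sub_inf_inf_sub_inf (a b : X) : (a - a ⊓ b) ⊓ (b - a ⊓ b) = 0 := by
  rw [← inf_sub, sub_self]

/-- With `m = v ⊓ w`, the elements `v - m` and `w - m` are disjoint, hence so are `v - m` and
`u * (w - m)`; adding `u * m + m` to both gives upper bounds of `v` and `u * w`. -/
theorem inf_mul_le (hpos : ∀ x y : X, 0 ≤ x → 0 ≤ y → 0 ≤ x * y)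
    (hf : ∀ x y u : X, x ⊓ y = 0 → 0 ≤ u → (u * x) ⊓ y = 0 ∧ (x * u) ⊓ y = 0)
    {u v w : X} (hu : 0 ≤ u) (hv : 0 ≤ v) (hw : 0 ≤ w) :
    v ⊓ (u * w) ≤ u * (v ⊓ w) + v ⊓ w := by
  have h0 := sub_inf_inf_sub_inf v w
  have hm : 0 ≤ v ⊓ w := le_inf hv hw
  generalize v ⊓ w = m at *
  rw [inf_comm] at h0
  have h1 := (hf _ _ u h0 hu).1
  rw [inf_comm, mul_sub] at h1
  have hum := hpos _ _ hu hm
  calc v ⊓ (u * w) ≤ (v - m + (u * m + m)) ⊓ (u * w - u * m + (u * m + m)) := by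
        refine inf_le_inf ?_ ?_
        · rw [← sub_nonneg]
          have e : v - m + (u * m + m) - v = u * m := by abel
          rwa [e]
        · rw [← sub_nonneg]
          have e : u * w - u * m + (u * m + m) - u * w = m := by abel
          rwa [e]
    _ = u * m + m := by rw [← inf_add, h1, zero_add]

/-- `u w ≤ w + u² w` for `u, w ≥ 0`. With `w - u w = b - c` split into positive and negative part,
`u w - w - u² w` lies below both `c` and `u b`, which are disjoint. -/
theorem mul_le_add_mul_mul (hpos : ∀ x y : X, 0 ≤ x → 0 ≤ y → 0 ≤ x * y)
    (hf : ∀ x y u : X, x ⊓ y = 0 → 0 ≤ u → (u * x) ⊓ y = 0 ∧ (x * u) ⊓ y = 0)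
    {u w : X} (hu : 0 ≤ u) (hw : 0 ≤ w) : u * w ≤ w + u * (u * w) := by
  set d := w - u * w with hd
  have hdis : (u * d⁺) ⊓ d⁻ = 0 := (hf _ _ u (posPart_inf_negPart_eq_zero d) hu).1
  have hbc : d⁺ - d⁻ = d := posPart_sub_negPart d
  have huw := hpos _ _ hu hw
  have huuw := hpos _ _ hu huw
  have huc := hpos _ _ hu (negPart_nonneg d)
  have k1 : u * w - (w + u * (u * w)) ≤ u * d⁺ := by
    have e : u * d⁺ = u * w - u * (u * w) + u * d⁻ := by
      rw [← mul_sub, ← mul_add, ← hd, ← sub_eq_iff_eq_add.1 hbc]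
    rw [e, ← sub_nonneg]
    have e2 : u * w - u * (u * w) + u * d⁻ - (u * w - (w + u * (u * w))) = u * d⁻ + w := by abel
    rw [e2]
    exact add_nonneg huc hw
  have k2 : u * w - (w + u * (u * w)) ≤ d⁻ := by
    have h := neg_le_negPart d
    refine le_trans ?_ h
    rw [← sub_nonneg, hd]
    have e2 : -(w - u * w) - (u * w - (w + u * (u * w))) = u * (u * w) := by abel
    rw [e2]
    exact huuw
  have k := le_inf k1 k2
  rw [hdis] at k
  exact sub_nonpos.1 k

/-- σ-Dedekind completeness implies the Archimedean property. -/
theorem nonpos_of_forall_nsmul_le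
    (hσ : ∀ S : Set X, S.Nonempty → S.Countable → BddAbove S → ∃ m : X, IsLUB S m)
    {g h : X} (H : ∀ n : ℕ, (n + 1) • g ≤ h) : g ≤ 0 := by
  obtain ⟨m, hm⟩ := hσ (Set.range fun n : ℕ => (n + 1) • g) (Set.range_nonempty _)
    (Set.countable_range _) ⟨h, by rintro _ ⟨n, rfl⟩; exact H n⟩
  -- Each `(n + 1) • g + g` is again a multiple of `g`, so `m - g` is also an upper bound.
  have h1 : m ≤ m - g := by
    refine hm.2 ?_
    rintro _ ⟨n, rfl⟩
    have := hm.1 ⟨n + 1, rfl⟩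
    simp only [succ_nsmul _ (n + 1)] at this
    exact le_sub_iff_add_le.2 this
  have h2 := sub_le_sub_right h1 m
  rw [sub_self, sub_right_comm, sub_self, zero_sub] at h2
  exact neg_nonneg.1 h2

variable [Module ℝ X] [PosSMulMono ℝ X] [IsScalarTower ℝ X X] [SMulCommClass ℝ X X]

/-- The inequality `u w ≤ w + u² w`, rescaled. -/
theorem mul_le_smul_add (hpos : ∀ x y : X, 0 ≤ x → 0 ≤ y → 0 ≤ x * y)
    (hf : ∀ x y u : X, x ⊓ y = 0 → 0 ≤ u → (u * x) ⊓ y = 0 ∧ (x * u) ⊓ y = 0)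
    {u w : X} (hu : 0 ≤ u) (hw : 0 ≤ w) {r : ℝ} (hr : 0 < r) :
    u * w ≤ r • w + r⁻¹ • (u * (u * w)) := by
  have h := mul_le_add_mul_mul hpos hf (smul_nonneg (inv_nonneg.2 hr.le) hu) hw
  have h2 := smul_le_smul_of_nonneg_left h hr.le
  simp only [smul_mul_assoc, mul_smul_comm, smul_add, smul_smul] at h2
  rwa [mul_inv_cancel₀ hr.ne', one_smul, ← mul_assoc, mul_inv_cancel₀ hr.ne', one_mul] at h2

/-- If `Y_β ↓ 0` then `u * Y_β + Y_β` has infimum `0`. -/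
theorem isGLB_mul_add (hpos : ∀ x y : X, 0 ≤ x → 0 ≤ y → 0 ≤ x * y)
    (hf : ∀ x y u : X, x ⊓ y = 0 → 0 ≤ u → (u * x) ⊓ y = 0 ∧ (x * u) ⊓ y = 0)
    (hσ : ∀ S : Set X, S.Nonempty → S.Countable → BddAbove S → ∃ m : X, IsLUB S m)
    {u : X} (hu : 0 ≤ u) {B : Type*} [Nonempty B] {leB : B → B → Prop} {Y : B → X}
    (hdir : ∀ b₁ b₂, ∃ b₃, leB b₁ b₃ ∧ leB b₂ b₃)
    (hanti : ∀ b₁ b₂, leB b₁ b₂ → Y b₂ ≤ Y b₁) (hglb : IsGLB (Set.range Y) 0) :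
    IsGLB (Set.range fun b => u * Y b + Y b) 0 := by
  have hY : ∀ b, 0 ≤ Y b := fun b => hglb.1 ⟨b, rfl⟩
  refine ⟨?_, ?_⟩
  · rintro _ ⟨b, rfl⟩
    exact add_nonneg (hpos _ _ hu (hY b)) (hY b)
  intro g hg
  obtain ⟨b₀⟩ := ‹Nonempty B›
  refine nonpos_of_forall_nsmul_le hσ (h := u * (u * Y b₀)) fun n => ?_
  have hr : (0 : ℝ) < n + 1 := by positivity
  generalize hrn : (n + 1 : ℝ) = r at hr
  have key : ∀ b, (r + 1)⁻¹ • (g - r⁻¹ • (u * (u * Y b₀))) ≤ Y b := by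
    intro b
    obtain ⟨c, hbc, h0c⟩ := hdir b b₀
    have h1 : g ≤ u * Y c + Y c := hg ⟨c, rfl⟩
    have h2 := mul_le_smul_add hpos hf hu (hY c) hr
    have h3 : r⁻¹ • (u * (u * Y c)) ≤ r⁻¹ • (u * (u * Y b₀)) :=
      smul_le_smul_of_nonneg_left (mul_le_mul_left_of_pos hpos hu
        (mul_le_mul_left_of_pos hpos hu (hanti _ _ h0c))) (inv_nonneg.2 hr.le)
    have h4 : g ≤ (r + 1) • Y c + r⁻¹ • (u * (u * Y b₀)) := by
      refine h1.trans ((add_le_add_left (h2.trans (add_le_add_right h3 _)) _).trans (le_of_eq ?_))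
      rw [add_smul, one_smul]
      abel
    have h5 := smul_le_smul_of_nonneg_left (sub_le_iff_le_add.2 h4)
      (inv_nonneg.2 (by positivity : (0 : ℝ) ≤ r + 1))
    rw [smul_smul, inv_mul_cancel₀ (by positivity), one_smul] at h5
    exact h5.trans (hanti _ _ hbc)
  have h6 : (r + 1)⁻¹ • (g - r⁻¹ • (u * (u * Y b₀))) ≤ 0 :=
    hglb.2 (by rintro _ ⟨b, rfl⟩; exact key b)
  have h7 := smul_le_smul_of_nonneg_left h6 (by positivity : (0 : ℝ) ≤ r * (r + 1))
  rw [smul_zero, smul_smul, mul_assoc, mul_inv_cancel₀ (by positivity), mul_one, smul_sub,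
    smul_smul, mul_inv_cancel₀ hr.ne', one_smul, sub_nonpos] at h7
  have h8 : (n + 1) • g = r • g := by
    rw [← hrn, ← Nat.cast_smul_eq_nsmul ℝ]
    push_cast
    rfl
  rw [h8]
  exact h7

end FAlgebra

/-- In a σ-Dedekind complete semiprime f-algebra, the algebra multiplication is
uo-continuous: `x_α →uo x` implies `y·x_α →uo y·x` for every `y`. -/
theorem statement17 {X : Type u} [Lattice X] [NonUnitalRing X]
    [CovariantClass X X (· + ·) (· ≤ ·)] [Module ℝ X] [PosSMulMono ℝ X]
    [IsScalarTower ℝ X X] [SMulCommClass ℝ X X]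
    (hpos : ∀ x y : X, 0 ≤ x → 0 ≤ y → 0 ≤ x * y)
    (hf : ∀ x y u : X, x ⊓ y = 0 → 0 ≤ u → (u * x) ⊓ y = 0 ∧ (x * u) ⊓ y = 0)
    (hσ : ∀ S : Set X, S.Nonempty → S.Countable → BddAbove S → ∃ m : X, IsLUB S m)
    (hsemiprime : ∀ x : X, x * x = 0 → x = 0)
    {A : Type v} [Preorder A] [Nonempty A] (hA : IsDirected A (· ≤ ·))
    (x : A → X) (l : X) (hx : UOConv x l) (y : X) :
    UOConv (fun a => y * x a) (y * l) := by
  intro v hv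
  obtain ⟨B, leB, Y, hne, hrefl, htrans, hdir, hanti, hglb, hdom⟩ := hx v hv
  have hy : 0 ≤ |y| := abs_nonneg y
  refine ⟨B, leB, fun b => |y| * Y b + Y b, hne, hrefl, htrans, hdir, ?_,
    isGLB_mul_add hpos hf hσ hy hdir hanti hglb, ?_⟩
  · intro b₁ b₂ h
    exact add_le_add (mul_le_mul_left_of_pos hpos hy (hanti _ _ h)) (hanti _ _ h)
  intro b
  obtain ⟨a₀, ha₀⟩ := hdom b
  refine ⟨a₀, fun a ha => ?_⟩
  have h := ha₀ a ha
  have hw : 0 ≤ |x a - l| := abs_nonneg _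
  rw [sub_zero, abs_of_nonneg (le_inf hv hw)] at h
  rw [sub_zero, abs_of_nonneg (le_inf hv (abs_nonneg _)), ← mul_sub]
  have h1 : |y * (x a - l)| ≤ |y| * |x a - l| := abs_mul_le_of_pos hpos _ _
  generalize |x a - l| = w at *
  generalize |y| = u at *
  calc v ⊓ |y * (x a - l)| ≤ v ⊓ (u * w) := inf_le_inf_left _ h1
    _ ≤ u * (v ⊓ w) + v ⊓ w := inf_mul_le hpos hf hy hv hw
    _ ≤ u * Y b + Y b := add_le_add (mul_le_mul_left_of_pos hpos hy h) h
end
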